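/- Let σ ∈ (0,1] and set W^op_σ := W_{(3+2σ)/4,σ}. If λ ≥ 0, K ⊆ ℕ is a finite set, and Q^σ(f) ≥ (1+λ)·Σ_{n≥1} W^op_σ(n)·f(n)² holds for every finitely supported f : ℕ → ℝ vanishing on K, then λ = 0. -/

import Mathlib

open Real Filter

/-- Generalized binomial coefficient via the Gamma function. -/
noncomputable def rbinom (a b : ℝ) : ℝ :=
  Real.Gamma (a + 1) / (Real.Gamma (b + 1) * Real.Gamma (a - b + 1))

/-- Kernel of the fractional Laplacian `(-Δ_ℕ)^σ` on the discrete half-line. -/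
noncomputable def Kker (σ : ℝ) (m n : ℕ) : ℝ :=
  (-1 : ℝ) ^ (m + n) *
    (rbinom (2 * σ) (σ + m - n) - rbinom (2 * σ) (σ + m + n))

/-- Quadratic form of `(-Δ_ℕ)^σ` (used for finitely supported `f` with `f 0 = 0`). -/
noncomputable def Qform (σ : ℝ) (f : ℕ → ℝ) : ℝ :=
  ∑' m : ℕ, ∑' n : ℕ, Kker σ m n * f m * f n

/-- The Hardy-weight `W_{α,σ}`. -/
noncomputable def Wweight (σ α : ℝ) (n : ℕ) : ℝ :=
  4 ^ σ * (Real.Gamma (3/2 - α + σ) * Real.Gamma α /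
            (Real.Gamma (α - σ) * Real.Gamma (3/2 - α))) *
    (Real.Gamma (n + α - σ - 1) * Real.Gamma (n - α + 2) /
      (Real.Gamma (n - α + σ + 2) * Real.Gamma (n + α - 1)))

/-- The Riesz potential `I_α`. -/
noncomputable def Riesz (α : ℝ) (n : ℕ) : ℝ :=
  (4 * n / (4 ^ α * Real.sqrt 2)) * Real.Gamma (3/2 - α) *
    Real.Gamma (n + α - 1) / (Real.Gamma α * Real.Gamma (n - α + 2))

section Helpers

open MeasureTheory Set Topology

/-- twice the sine of half the angle -/
noncomputable def U (x : ℝ) : ℝ := 2 * Real.sin (x / 2)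

lemma U_cont : Continuous U := by unfold U; fun_prop

lemma U_pos {x : ℝ} (h0 : 0 < x) (h1 : x ≤ π) : 0 < U x := by
  unfold U
  have := Real.sin_pos_of_pos_of_lt_pi (x := x/2) (by linarith) (by linarith [Real.pi_pos])
  linarith

lemma U_nonneg {x : ℝ} (h0 : 0 ≤ x) (h1 : x ≤ π) : 0 ≤ U x := by
  rcases h0.eq_or_lt with h | h
  · subst h; simp [U]
  · exact (U_pos h h1).le

lemma U_le_two (x : ℝ) : U x ≤ 2 := by
  unfold U; linarith [Real.sin_le_one (x/2)]

lemma U_zero : U 0 = 0 := by simp [U]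
lemma U_pi : U π = 2 := by simp [U]

lemma U_deriv (x : ℝ) : HasDerivAt U (Real.cos (x/2)) x := by
  unfold U
  have h : HasDerivAt (fun x : ℝ => x/2) (1/2) x := (hasDerivAt_id x).div_const 2
  have := (h.sin).const_mul 2
  exact this.congr_deriv (by ring)

lemma sin_eq_U (x : ℝ) : Real.sin x = U x * Real.cos (x/2) := by
  unfold U
  have := Real.sin_two_mul (x/2)
  rw [← this]; congr 1; ring

lemma U_sq (x : ℝ) : U x ^ 2 = 2 - 2 * Real.cos x := by
  unfold U
  have := Real.cos_two_mul (x/2)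
  have h2 := Real.sin_sq_add_cos_sq (x/2)
  rw [show 2 * (x/2) = x by ring] at this
  rw [this]; nlinarith

lemma U_rpow_integrable {r : ℝ} (hr : -1 < r) :
    IntervalIntegrable (fun x => U x ^ r) volume 0 π := by
  rcases le_or_gt 0 r with h | h
  · apply Continuous.intervalIntegrable
    exact U_cont.rpow_const (fun x => Or.inr h)
  · have h1 : IntervalIntegrable (fun x : ℝ => (2/π)^r * x ^ r) volume 0 π :=
      (intervalIntegral.intervalIntegrable_rpow' hr).const_mul _
    refine h1.mono_fun ?_ ?_
    · exact (U_cont.measurable.pow_const r).aestronglyMeasurable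
    · refine (ae_restrict_iff' measurableSet_uIoc).2 (Filter.Eventually.of_forall fun x hx => ?_)
      rw [uIoc_of_le Real.pi_pos.le] at hx
      have hU := U_pos hx.1 hx.2
      show ‖U x ^ r‖ ≤ ‖(2 / π) ^ r * x ^ r‖
      rw [Real.norm_of_nonneg (Real.rpow_nonneg hU.le _), Real.norm_of_nonneg]
      · rw [← Real.mul_rpow (by positivity) hx.1.le]
        apply Real.rpow_le_rpow_of_nonpos
        · have := hx.1; positivity
        · have := Real.mul_le_sin (x := x/2) (by linarith [hx.1]) (by linarith [hx.2])
          unfold U; linarith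
        · exact h.le
      · have := hx.1; positivity

lemma U_mul_integrable {r : ℝ} (hr : -1 < r) {g : ℝ → ℝ} (hg : Continuous g) :
    IntervalIntegrable (fun x => U x ^ r * g x) volume 0 π :=
  (U_rpow_integrable hr).mul_continuousOn hg.continuousOn

lemma beta_real {a b : ℝ} (ha : 0 < a) (hb : 0 < b) :
    ∫ x in Ioo (0:ℝ) 1, x ^ (a-1) * (1-x)^(b-1) = Real.Gamma a * Real.Gamma b / Real.Gamma (a+b) := by
  have h := ProbabilityTheory.beta_eq_betaIntegralReal a b ha hb
  rw [ProbabilityTheory.beta] at h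
  rw [h, Complex.betaIntegral, intervalIntegral.integral_of_le (by norm_num),
      ← integral_Ioc_eq_integral_Ioo, ← RCLike.re_to_complex, ← integral_re]
  · refine setIntegral_congr_fun measurableSet_Ioc fun x ⟨hx1, hx₂⟩ ↦ ?_
    norm_cast
    rw [← Complex.ofReal_cpow, ← Complex.ofReal_cpow, RCLike.re_to_complex,
        Complex.re_mul_ofReal, Complex.ofReal_re]
    all_goals linarith
  convert! Complex.betaIntegral_convergent (u := a) (v := b) (by simpa) (by simpa)
  rw [intervalIntegrable_iff_integrableOn_Ioc_of_le (by simp), IntegrableOn]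

lemma c_zero {s : ℝ} (hs : -(1/2) < s) :
    ∫ x in (0:ℝ)..π, U x ^ (2*s) = √π * 4^s * Real.Gamma (s+1/2) / Real.Gamma (s+1) := by
  have hb := beta_real (a := s+1/2) (b := 1/2) (by linarith) (by norm_num)
  have himg : (fun x : ℝ => Real.sin (x/2)^2) '' Ioo 0 π = Ioo 0 1 := by
    ext y
    constructor
    · rintro ⟨x, hx, rfl⟩
      have h1 := Real.sin_pos_of_pos_of_lt_pi (x := x/2) (by linarith [hx.1]) (by linarith [hx.1, hx.2])
      have h2 := Real.cos_pos_of_mem_Ioo (x := x/2) ⟨by linarith [hx.1, Real.pi_pos], by linarith [hx.2]⟩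
      have h3 := Real.sin_sq_add_cos_sq (x/2)
      exact ⟨by positivity, by nlinarith [sq_pos_of_pos h2]⟩
    · rintro ⟨h0, h1⟩
      have hs0 : 0 < √y := Real.sqrt_pos.2 h0
      have hs1 : √y < 1 := by rw [Real.sqrt_lt' one_pos]; simpa using h1
      refine ⟨2 * Real.arcsin √y, ⟨?_, ?_⟩, ?_⟩
      · have := Real.arcsin_pos.2 hs0; linarith
      · have := Real.arcsin_lt_pi_div_two.2 hs1; linarith
      · simp only
        rw [mul_div_cancel_left₀ _ (two_ne_zero), Real.sin_arcsin (by linarith) hs1.le, Real.sq_sqrt h0.le]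
  have hinj : InjOn (fun x : ℝ => Real.sin (x/2)^2) (Ioo 0 π) := by
    intro x hx y hy hxy
    simp only at hxy
    have h1 := Real.sin_pos_of_pos_of_lt_pi (x := x/2) (by linarith [hx.1]) (by linarith [hx.1, hx.2])
    have h2 := Real.sin_pos_of_pos_of_lt_pi (x := y/2) (by linarith [hy.1]) (by linarith [hy.1, hy.2])
    have h3 : Real.sin (x/2) = Real.sin (y/2) := by
      exact (pow_left_inj₀ h1.le h2.le two_ne_zero).1 hxy
    have := Real.injOn_sin ⟨by linarith [hx.1, Real.pi_pos], by linarith [hx.2]⟩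
      ⟨by linarith [hy.1, Real.pi_pos], by linarith [hy.2]⟩ h3
    linarith
  have hder : ∀ x ∈ Ioo 0 π, HasDerivWithinAt (fun x : ℝ => Real.sin (x/2)^2)
      (Real.sin (x/2) * Real.cos (x/2)) (Ioo 0 π) x := by
    intro x _
    have h : HasDerivAt (fun x : ℝ => x/2) (1/2) x := (hasDerivAt_id x).div_const 2
    have := ((h.sin).pow 2).hasDerivWithinAt (s := Ioo 0 π)
    exact this.congr_deriv (by simp; ring)
  have hcv := integral_image_eq_integral_abs_deriv_smul measurableSet_Ioo hder hinj
    (fun x => x ^ (s+1/2-1) * (1-x)^((1/2:ℝ)-1))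
  rw [himg, hb] at hcv
  rw [intervalIntegral.integral_of_le Real.pi_pos.le, integral_Ioc_eq_integral_Ioo]
  have : ∫ x in Ioo 0 π, U x ^ (2*s) = ∫ x in Ioo 0 π, 4^s * (|Real.sin (x/2) * Real.cos (x/2)| •
     ((Real.sin (x/2)^2) ^ (s+1/2-1) * (1-(Real.sin (x/2)^2))^((1/2:ℝ)-1))) := by
    refine setIntegral_congr_fun measurableSet_Ioo fun x hx => ?_
    have h1 := Real.sin_pos_of_pos_of_lt_pi (x := x/2) (by linarith [hx.1]) (by linarith [hx.1, hx.2])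
    have h2 := Real.cos_pos_of_mem_Ioo (x := x/2) ⟨by linarith [hx.1, Real.pi_pos], by linarith [hx.2]⟩
    have h3 : 1 - Real.sin (x/2)^2 = Real.cos (x/2)^2 := by linarith [Real.sin_sq_add_cos_sq (x/2)]
    simp only [U]
    rw [h3, abs_of_pos (by positivity), ← Real.rpow_natCast, ← Real.rpow_natCast, ← Real.rpow_mul h1.le,
      ← Real.rpow_mul h2.le, Real.mul_rpow (by norm_num) h1.le, Real.rpow_mul (by norm_num)]
    norm_num
    rw [show (2 * (s + 1/2 - 1)) = 2*s - 1 by ring, Real.rpow_sub_one h1.ne', Real.rpow_neg_one]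
    field_simp
    simp
  rw [this, integral_const_mul, ← hcv, Real.Gamma_one_half_eq, show s+1/2+1/2 = s+1 by ring]
  ring

/-- cosine moments -/
noncomputable def cI (s : ℝ) (k : ℕ) : ℝ := ∫ x in (0:ℝ)..π, U x ^ (2*s) * Real.cos (k * x)

lemma cI_zero {s : ℝ} (hs : -(1/2) < s) :
    cI s 0 = √π * 4^s * Real.Gamma (s+1/2) / Real.Gamma (s+1) := by
  rw [← c_zero hs]; simp [cI]

lemma cI_succ {s : ℝ} (hs : -(1/2) < s) (k : ℕ) :
    (s + k + 1) * cI s (k+1) = (k - s) * cI s k := by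
  have h := intervalIntegral.integral_eq_sub_of_hasDerivAt_of_le (a := 0) (b := π)
    (f := fun x => U x ^ (2*s+1) * Real.cos ((k+1/2)*x))
    (f' := fun x => U x ^ (2*s) * ((s + k + 1) * Real.cos ((k+1:ℕ) * x) + (s - k) * Real.cos (k*x)))
    Real.pi_pos.le ?_ ?_ ?_
  · have e1 : Real.cos ((k+1/2)*π) = 0 := by
      rw [Real.cos_eq_zero_iff]; exact ⟨k, by push_cast; ring⟩
    rw [e1, U_zero, Real.zero_rpow (by linarith)] at h
    simp only [mul_zero, zero_mul, sub_zero] at h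
    have : ∫ x in (0:ℝ)..π, U x ^ (2*s) * ((s + k + 1) * Real.cos ((k+1:ℕ) * x) + (s - k) * Real.cos (k*x))
       = (s+k+1) * cI s (k+1) + (s-k) * cI s k := by
      unfold cI
      rw [← intervalIntegral.integral_const_mul, ← intervalIntegral.integral_const_mul,
        ← intervalIntegral.integral_add]
      · congr 1; ext x; ring
      · exact (U_mul_integrable (by linarith) (by fun_prop)).const_mul _
      · exact (U_mul_integrable (by linarith) (by fun_prop)).const_mul _
    linarith
  · apply Continuous.continuousOn
    exact (U_cont.rpow_const (fun x => Or.inr (by linarith))).mul (by fun_prop)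
  · intro x hx
    have hU := U_pos hx.1 hx.2.le
    have h1 := (U_deriv x).rpow_const (p := 2*s+1) (Or.inl hU.ne')
    have h2 : HasDerivAt (fun x : ℝ => (k+1/2)*x) ((k+1/2) * 1) x := (hasDerivAt_id x).const_mul _
    have h3 := h1.mul h2.cos
    refine h3.congr_deriv ?_
    rw [show 2*s+1-1 = 2*s by ring, Real.rpow_add_one hU.ne']
    have e1 : Real.cos ((k+1:ℕ) * x) = Real.cos ((k+1/2)*x) * Real.cos (x/2) - Real.sin ((k+1/2)*x) * Real.sin (x/2) := by
      rw [← Real.cos_add]; congr 1; push_cast; ring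
    have e2 : Real.cos (k * x) = Real.cos ((k+1/2)*x) * Real.cos (x/2) + Real.sin ((k+1/2)*x) * Real.sin (x/2) := by
      rw [← Real.cos_sub]; congr 1; ring
    rw [e1, e2]
    have e3 : U x = 2 * Real.sin (x/2) := rfl
    generalize U x ^ (2*s) = P
    rw [e3]; ring
  · exact U_mul_integrable (by linarith) (by fun_prop)

lemma Gamma_inv_rec (x : ℝ) : (Real.Gamma x)⁻¹ = x * (Real.Gamma (x+1))⁻¹ := by
  rcases eq_or_ne x 0 with h | h
  · subst h; simp
  · rw [Real.Gamma_add_one h, mul_inv, ← mul_assoc, mul_inv_cancel₀ h, one_mul]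

lemma cI_binom {s : ℝ} (hs : 0 < s) (k : ℕ) :
    cI s k = π * (-1)^k * rbinom (2*s) (s+k) := by
  induction k with
  | zero =>
    rw [cI_zero (by linarith)]
    have h := Real.Gamma_mul_Gamma_add_half (s+1/2)
    rw [show s + 1/2+1/2 = s+1 by ring, show 2*(s+1/2) = 2*s+1 by ring,
      show 1 - (2*s+1) = -(2*s) by ring, Real.rpow_neg (by norm_num), Real.rpow_mul (by norm_num)] at h
    norm_num at h
    have hg : Real.Gamma (s+1) ≠ 0 := (Real.Gamma_pos_of_pos (by linarith)).ne'
    have h4 : (4:ℝ)^s ≠ 0 := by positivity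
    simp only [rbinom]
    norm_num
    rw [show 2*s - s + 1 = s+1 by ring, div_eq_iff hg]
    field_simp at h ⊢
    have hp : √π * √π = π := Real.mul_self_sqrt Real.pi_pos.le
    rw [h, mul_assoc, hp]
  | succ k ih =>
    have h := cI_succ (s := s) (by linarith) k
    have hne : s + k + 1 ≠ 0 := by positivity
    apply mul_left_cancel₀ hne
    rw [h, ih]
    simp only [rbinom, div_eq_mul_inv, mul_inv]
    have e1 := Gamma_inv_rec (2*s - (s + (k+1:ℕ)) + 1)
    have e2 := Gamma_inv_rec (s + k + 1)
    rw [show 2*s - (s + (k+1:ℕ)) + 1 + 1 = 2*s - (s+k)+1 by push_cast; ring] at e1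
    rw [e1, e2]
    push_cast
    rw [show s + (k+1:ℝ) + 1 = s + k + 1 + 1 by ring, pow_succ]
    ring

lemma rbinom_symm (s x : ℝ) : rbinom (2*s) (s - x) = rbinom (2*s) (s + x) := by
  unfold rbinom
  rw [mul_comm (Real.Gamma (s - x + 1))]
  congr 3 <;> ring_nf

lemma cos_int_binom {s : ℝ} (hs : 0 < s) (m n : ℕ) :
    ∫ x in (0:ℝ)..π, U x ^ (2*s) * Real.cos (((m:ℝ) - n) * x) =
      π * (-1)^(m+n) * rbinom (2*s) (s + m - n) := by
  rcases le_total n m with h | h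
  · obtain ⟨k, rfl⟩ := Nat.exists_eq_add_of_le h
    have := cI_binom hs k
    unfold cI at this
    rw [show s + ((n + k : ℕ):ℝ) - n = s + k by push_cast; ring]
    rw [show (-1:ℝ)^(n+k+n) = (-1)^k by rw [show n+k+n = k + 2*n by ring, pow_add, pow_mul]; simp]
    rw [← this]
    congr 1; ext x; congr 2; push_cast; ring
  · obtain ⟨k, rfl⟩ := Nat.exists_eq_add_of_le h
    have := cI_binom hs k
    unfold cI at this
    rw [show s + (m:ℝ) - (m+k:ℕ) = s - k by push_cast; ring, rbinom_symm]
    rw [show (-1:ℝ)^(m + (m + k)) = (-1)^k by rw [show m + (m+k) = k + 2*m by ring, pow_add, pow_mul]; simp]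
    rw [← this]
    congr 1; ext x; congr 1; rw [← Real.cos_neg]; congr 1; push_cast; ring

lemma Kker_eq {s : ℝ} (hs : 0 < s) (m n : ℕ) :
    Kker s m n = (2/π) * ∫ x in (0:ℝ)..π, U x ^ (2*s) * (Real.sin (m*x) * Real.sin (n*x)) := by
  have h1 := cos_int_binom hs m n
  have h2 := cI_binom hs (m+n)
  unfold cI at h2
  have : ∫ x in (0:ℝ)..π, U x ^ (2*s) * (Real.sin (m*x) * Real.sin (n*x)) =
     (1/2) * ((∫ x in (0:ℝ)..π, U x ^ (2*s) * Real.cos (((m:ℝ) - n) * x)) -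
       ∫ x in (0:ℝ)..π, U x ^ (2*s) * Real.cos ((m+n:ℕ) * x)) := by
    rw [← intervalIntegral.integral_sub, ← intervalIntegral.integral_const_mul]
    · congr 1; ext x
      have e1 : Real.cos (((m:ℝ) - n) * x) = Real.cos (m*x) * Real.cos (n*x) + Real.sin (m*x) * Real.sin (n*x) := by
        rw [← Real.cos_sub]; congr 1; ring
      have e2 : Real.cos ((m+n:ℕ) * x) = Real.cos (m*x) * Real.cos (n*x) - Real.sin (m*x) * Real.sin (n*x) := by
        rw [← Real.cos_add]; congr 1; push_cast; ring
      rw [e1, e2]; ring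
    · exact U_mul_integrable (by linarith) (by fun_prop)
    · exact U_mul_integrable (by linarith) (by fun_prop)
  rw [this, h1, h2, Kker]
  have := Real.pi_ne_zero
  push_cast
  rw [show s + ((m:ℝ) + n) = s + m + n by ring]
  field_simp

lemma Qform_eq {s : ℝ} (hs : 0 < s) (f : ℕ → ℝ) (S : Finset ℕ) (hf : ∀ n ∉ S, f n = 0) :
    Qform s f = (2/π) * ∫ x in (0:ℝ)..π, U x ^ (2*s) * (∑ n ∈ S, f n * Real.sin (n*x))^2 := by
  unfold Qform
  have h1 : ∀ m, ∑' n : ℕ, Kker s m n * f m * f n = ∑ n ∈ S, Kker s m n * f m * f n := by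
    intro m; apply tsum_eq_sum; intro n hn; rw [hf n hn, mul_zero]
  simp_rw [h1]
  rw [tsum_eq_sum (s := S)]
  · simp_rw [Kker_eq hs]
    have : ∀ x, U x ^ (2*s) * (∑ n ∈ S, f n * Real.sin (n*x))^2 =
      ∑ m ∈ S, ∑ n ∈ S, (f m * f n) * (U x ^ (2*s) * (Real.sin (m*x) * Real.sin (n*x))) := by
      intro x
      rw [sq, Finset.sum_mul_sum, Finset.mul_sum]
      refine Finset.sum_congr rfl fun m _ => ?_
      rw [Finset.mul_sum]
      refine Finset.sum_congr rfl fun n _ => ?_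
      ring
    simp_rw [this]
    rw [intervalIntegral.integral_finsetSum, Finset.mul_sum]
    · refine Finset.sum_congr rfl fun m _ => ?_
      rw [intervalIntegral.integral_finsetSum, Finset.mul_sum]
      · refine Finset.sum_congr rfl fun n _ => ?_
        rw [intervalIntegral.integral_const_mul]; ring
      · intro n _
        exact (U_mul_integrable (by linarith) (by fun_prop)).const_mul _
    · intro m _
      have hc : Continuous fun x => U x ^ (2*s) := U_cont.rpow_const (fun x => Or.inr (by linarith))
      apply Continuous.intervalIntegrable
      fun_prop
  · intro m hm
    apply Finset.sum_eq_zero; intro n _; rw [hf m hm]; ring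

lemma integral_odd {g : ℝ → ℝ} (hg : Continuous g) (ho : ∀ x, g (-x) = - g x) :
    ∫ x in (-π)..π, g x = 0 := by
  rw [← intervalIntegral.integral_add_adjacent_intervals (b := 0) (hg.intervalIntegrable _ _) (hg.intervalIntegrable _ _)]
  have : ∫ x in (-π)..0, g x = ∫ x in (0:ℝ)..π, g (-x) := by
    rw [intervalIntegral.integral_comp_neg]; simp
  rw [this]; simp_rw [ho]; rw [intervalIntegral.integral_neg]; ring

lemma integral_even {g : ℝ → ℝ} (hg : Continuous g) (ho : ∀ x, g (-x) = g x) :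
    ∫ x in (-π)..π, g x = 2 * ∫ x in (0:ℝ)..π, g x := by
  rw [← intervalIntegral.integral_add_adjacent_intervals (b := 0) (hg.intervalIntegrable _ _) (hg.intervalIntegrable _ _)]
  have : ∫ x in (-π)..0, g x = ∫ x in (0:ℝ)..π, g (-x) := by
    rw [intervalIntegral.integral_comp_neg]; simp
  rw [this]; simp_rw [ho]; ring

/-- sine coefficients -/
noncomputable def sC (F : ℝ → ℝ) (n : ℕ) : ℝ := (2/π) * ∫ x in (0:ℝ)..π, F x * Real.sin (n*x)

lemma sfourier_norm {F : ℝ → ℝ} (hF : Continuous F) (ho : ∀ x, F (-x) = - F x) (n : ℤ) :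
    ‖fourierCoeffOn (a := -π) (b := π) (by linarith [Real.pi_pos]) (fun x => (F x : ℂ)) n‖^2 =
      ((1/π) * ∫ x in (0:ℝ)..π, F x * Real.sin (n*x))^2 := by
  rw [fourierCoeffOn_eq_integral]
  have e : ∀ x : ℝ, (fourier (-n)) (x : AddCircle (π - -π)) • (F x : ℂ) =
      ((F x * Real.cos (n*x) : ℝ) : ℂ) + ((-(F x * Real.sin (n*x)) : ℝ) : ℂ) * Complex.I := by
    intro x
    rw [fourier_coe_apply]
    have : (2 * π * Complex.I * ((-n : ℤ) : ℂ) * x / ((π - -π : ℝ) : ℂ)) = ((-(n*x) : ℝ) : ℂ) * Complex.I := by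
      have : (π : ℂ) ≠ 0 := by exact_mod_cast Real.pi_ne_zero
      push_cast
      field_simp
      ring
    rw [this, Complex.exp_mul_I, ← Complex.ofReal_cos, ← Complex.ofReal_sin, Real.cos_neg, Real.sin_neg]
    push_cast
    simp only [smul_eq_mul]
    ring
  simp_rw [e]
  have hc : Continuous fun x : ℝ => F x * Real.cos (n*x) := by fun_prop
  have hs : Continuous fun x : ℝ => F x * Real.sin (n*x) := by fun_prop
  rw [intervalIntegral.integral_add, intervalIntegral.integral_mul_const, intervalIntegral.integral_ofReal,
    intervalIntegral.integral_ofReal, integral_odd hc, intervalIntegral.integral_neg, integral_even hs]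
  · rw [Complex.ofReal_zero, zero_add, norm_smul, norm_mul, Complex.norm_I, mul_one, Complex.norm_real, mul_pow,
      Real.norm_eq_abs, sq_abs, Real.norm_eq_abs, sq_abs]
    have := Real.pi_ne_zero
    field_simp
    ring
  · intro x; rw [ho]; simp
  · intro x; rw [ho]; simp [Real.cos_neg]
  · apply Continuous.intervalIntegrable; exact Complex.continuous_ofReal.comp hc
  · apply Continuous.intervalIntegrable
    exact (Complex.continuous_ofReal.comp hs.neg).mul continuous_const

lemma parseval {F : ℝ → ℝ} (hF : Continuous F) (ho : ∀ x, F (-x) = - F x) :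
    HasSum (fun n : ℕ => (π/2) * sC F n ^ 2) (∫ x in (0:ℝ)..π, F x ^ 2) := by
  have hL : MemLp (fun x => (F x : ℂ)) 2 (volume.restrict (Ioc (-π) π)) := by
    obtain ⟨C, hC⟩ := (isCompact_Icc (a := -π) (b := π)).exists_bound_of_continuousOn
      (f := fun x => (F x : ℂ)) (Complex.continuous_ofReal.comp hF).continuousOn
    refine MemLp.of_bound (Complex.continuous_ofReal.comp hF).aestronglyMeasurable C ?_
    refine (ae_restrict_iff' measurableSet_Ioc).2 (Filter.Eventually.of_forall fun x hx => hC x ⟨hx.1.le, hx.2⟩)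
  have h := hasSum_sq_fourierCoeffOn (a := -π) (b := π) (by linarith [Real.pi_pos]) hL
  simp_rw [sfourier_norm hF ho] at h
  have h2 := h.nat_add_neg
  have e : ∫ x in (-π)..π, ‖(F x : ℂ)‖^2 = 2 * ∫ x in (0:ℝ)..π, F x ^ 2 := by
    rw [← integral_even (by fun_prop)]
    · simp
    · intro x; rw [ho]; ring
  rw [e] at h2
  have h3 := h2.mul_left π
  have e1 : (fun n : ℕ => (π/2) * sC F n ^ 2) = fun i : ℕ => π *
        ((1 / π * ∫ (x : ℝ) in (0:ℝ)..π, F x * Real.sin (((i:ℤ):ℝ) * x)) ^ 2 +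
          (1 / π * ∫ (x : ℝ) in (0:ℝ)..π, F x * Real.sin (((-(i:ℤ) : ℤ) : ℝ) * x)) ^ 2) := by
    ext n
    unfold sC
    have : ∀ x : ℝ, F x * Real.sin (((-(n:ℤ) : ℤ) : ℝ) * x) = -(F x * Real.sin (n*x)) := by
      intro x; push_cast; rw [neg_mul, Real.sin_neg]; ring
    simp_rw [this]
    rw [intervalIntegral.integral_neg]
    push_cast
    ring
  have e2 : (∫ x in (0:ℝ)..π, F x ^ 2) = π * ((π - -π)⁻¹ • (2 * ∫ (x : ℝ) in (0:ℝ)..π, F x ^ 2) +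
      (1 / π * ∫ (x : ℝ) in (0:ℝ)..π, F x * Real.sin (((0:ℤ):ℝ) * x)) ^ 2) := by
    have := Real.pi_ne_zero
    simp
    field_simp
    ring
  rw [e1, e2]
  exact h3

lemma sin_orth (m n : ℕ) (hm : m ≠ 0) :
    ∫ x in (0:ℝ)..π, Real.sin (m*x) * Real.sin (n*x) = if m = n then π/2 else 0 := by
  have hcos : ∀ k : ℤ, k ≠ 0 → ∫ x in (0:ℝ)..π, Real.cos (k*x) = 0 := by
    intro k hk
    rw [intervalIntegral.integral_comp_mul_left (f := Real.cos) (by exact_mod_cast hk), integral_cos]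
    simp [Real.sin_int_mul_pi]
  have e : ∫ x in (0:ℝ)..π, Real.sin (m*x) * Real.sin (n*x) =
     (1/2) * ((∫ x in (0:ℝ)..π, Real.cos (((m - n : ℤ):ℝ) * x)) -
       ∫ x in (0:ℝ)..π, Real.cos (((m+n:ℤ):ℝ) * x)) := by
    rw [← intervalIntegral.integral_sub, ← intervalIntegral.integral_const_mul]
    · congr 1; ext x
      have e1 : Real.cos (((m - n : ℤ):ℝ) * x) = Real.cos (m*x) * Real.cos (n*x) + Real.sin (m*x) * Real.sin (n*x) := by
        rw [← Real.cos_sub]; congr 1; push_cast; ring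
      have e2 : Real.cos (((m+n:ℤ):ℝ) * x) = Real.cos (m*x) * Real.cos (n*x) - Real.sin (m*x) * Real.sin (n*x) := by
        rw [← Real.cos_add]; congr 1; push_cast; ring
      rw [e1, e2]; ring
    · apply Continuous.intervalIntegrable; fun_prop
    · apply Continuous.intervalIntegrable; fun_prop
  rw [e, hcos (m+n) (by omega)]
  split_ifs with h
  · subst h; simp; ring
  · rw [hcos (m-n) (by omega)]; simp

lemma sC_zero (F : ℝ → ℝ) : sC F 0 = 0 := by simp [sC]

lemma int_F_sin (F : ℝ → ℝ) (n : ℕ) : ∫ x in (0:ℝ)..π, F x * Real.sin (n*x) = (π/2) * sC F n := by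
  unfold sC; have := Real.pi_ne_zero; field_simp

lemma sC_sum (S : Finset ℕ) (a : ℕ → ℝ) (ha : a 0 = 0) (n : ℕ) :
    sC (fun x => ∑ k ∈ S, a k * Real.sin (k*x)) n = if n ∈ S then a n else 0 := by
  unfold sC
  simp_rw [Finset.sum_mul]
  rw [intervalIntegral.integral_finsetSum]
  · simp_rw [mul_assoc]
    simp_rw [intervalIntegral.integral_const_mul]
    have : ∀ k ∈ S, a k * ∫ x in (0:ℝ)..π, Real.sin (k*x) * Real.sin (n*x) = if k = n then a n * (π/2) else 0 := by
      intro k _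
      rcases eq_or_ne k 0 with h | h
      · subst h
        rw [ha]; split_ifs with h
        · rw [← h, ha]; simp
        · simp
      · rw [sin_orth k n h]; split_ifs with h
        · rw [h]
        · simp
    rw [Finset.sum_congr rfl this, Finset.sum_ite_eq']
    have := Real.pi_ne_zero
    split_ifs
    · field_simp
    · simp
  · intro k _; apply Continuous.intervalIntegrable; fun_prop

lemma L2_conv {F : ℝ → ℝ} (hF : Continuous F) (ho : ∀ x, F (-x) = - F x) :
    Tendsto (fun N : ℕ => ∫ x in (0:ℝ)..π, (F x - ∑ n ∈ Finset.range N, sC F n * Real.sin (n*x))^2)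
      atTop (𝓝 0) := by
  have h := (parseval hF ho).tendsto_sum_nat
  have h2 := (tendsto_const_nhds (x := ∫ x in (0:ℝ)..π, F x ^ 2)).sub h
  rw [sub_self] at h2
  refine h2.congr fun N => ?_
  have key : ∀ G : ℝ → ℝ, Continuous G →
      ∫ x in (0:ℝ)..π, G x * ∑ n ∈ Finset.range N, sC F n * Real.sin (n*x) =
       ∑ n ∈ Finset.range N, sC F n * ((π/2) * sC G n) := by
    intro G hG
    simp_rw [Finset.mul_sum]
    rw [intervalIntegral.integral_finsetSum]
    · refine Finset.sum_congr rfl fun n _ => ?_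
      rw [← int_F_sin, ← intervalIntegral.integral_const_mul]
      congr 1; ext x; ring
    · intro k _; apply Continuous.intervalIntegrable; fun_prop
  have e : ∀ x, (F x - ∑ n ∈ Finset.range N, sC F n * Real.sin (n*x))^2 = F x ^ 2 -
     2 * (F x * ∑ n ∈ Finset.range N, sC F n * Real.sin (n*x)) +
     (∑ n ∈ Finset.range N, sC F n * Real.sin (n*x)) * ∑ n ∈ Finset.range N, sC F n * Real.sin (n*x) := by
    intro x; ring
  simp_rw [e]
  rw [intervalIntegral.integral_add, intervalIntegral.integral_sub, intervalIntegral.integral_const_mul,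
    key F hF, key (fun x => ∑ n ∈ Finset.range N, sC F n * Real.sin (n*x)) (by fun_prop)]
  · have : ∑ n ∈ Finset.range N, sC F n * ((π/2) * sC (fun x => ∑ n ∈ Finset.range N, sC F n * Real.sin (n*x)) n)
       = ∑ n ∈ Finset.range N, sC F n * ((π/2) * sC F n) := by
      refine Finset.sum_congr rfl fun n hn => ?_
      rw [sC_sum _ _ (sC_zero F), if_pos hn]
    rw [this]
    have : ∑ n ∈ Finset.range N, (π/2) * sC F n ^ 2 = ∑ n ∈ Finset.range N, sC F n * ((π/2) * sC F n) := by
      refine Finset.sum_congr rfl fun n hn => ?_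
      ring
    rw [this]; ring
  all_goals apply Continuous.intervalIntegrable; fun_prop

lemma young {x y η : ℝ} (hη : 0 < η) : (x - y)^2 ≤ (1+η) * x^2 + (1+1/η) * y^2 := by
  have h : (1+η) * x^2 + (1+1/η) * y^2 - (x-y)^2 = (η * x + y)^2 / η := by
    field_simp; ring
  have : 0 ≤ (η * x + y)^2 / η := by positivity
  linarith

lemma U_int_young {s η : ℝ} (hs : 0 < s) (hη : 0 < η) {F G : ℝ → ℝ} (hF : Continuous F) (hG : Continuous G) :
    ∫ x in (0:ℝ)..π, U x ^ (2*s) * (F x - G x)^2 ≤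
     (1+η) * (∫ x in (0:ℝ)..π, U x ^ (2*s) * F x^2) + (1+1/η) * 2^(2*s) * ∫ x in (0:ℝ)..π, G x ^2 := by
  have hc : Continuous fun x => U x ^ (2*s) := U_cont.rpow_const (fun x => Or.inr (by linarith))
  rw [← intervalIntegral.integral_const_mul, ← intervalIntegral.integral_const_mul, ← intervalIntegral.integral_add]
  · apply intervalIntegral.integral_mono_on Real.pi_pos.le
    · apply Continuous.intervalIntegrable; fun_prop
    · apply Continuous.intervalIntegrable; fun_prop
    · intro x hx
      have h0 := U_nonneg hx.1 hx.2
      have h1 : U x ^ (2*s) ≤ 2^(2*s) := Real.rpow_le_rpow h0 (U_le_two x) (by linarith)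
      have h2 : 0 ≤ U x ^ (2*s) := Real.rpow_nonneg h0 _
      have h3 := young (x := F x) (y := G x) hη
      have h4 : U x ^ (2*s) * (F x - G x)^2 ≤ U x ^ (2*s) * ((1+η) * F x^2 + (1+1/η) * G x^2) := by gcongr
      have h5 : U x ^ (2*s) * ((1+1/η) * G x^2) ≤ 2 ^ (2*s) * ((1+1/η) * G x^2) := by gcongr
      nlinarith
  · apply Continuous.intervalIntegrable; fun_prop
  · apply Continuous.intervalIntegrable; fun_prop

lemma claimA {s L : ℝ} (hs : 0 < s) (W : ℕ → ℝ) (hW : ∀ n, 1 ≤ n → 0 ≤ W n) (hL : 0 ≤ L) (K : Finset ℕ)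
    (h : ∀ f : ℕ → ℝ, f 0 = 0 → (Function.support f).Finite → (∀ n ∈ K, f n = 0) →
      L * (∑' n : ℕ, W n * (f n) ^ 2) ≤ Qform s f)
    {F : ℝ → ℝ} (hF : Continuous F) (ho : ∀ x, F (-x) = - F x) (hK : ∀ n ∈ K, sC F n = 0) (M : ℕ) :
    L * ∑ n ∈ Finset.range M, W n * sC F n ^ 2 ≤ (2/π) * ∫ x in (0:ℝ)..π, U x ^ (2*s) * F x ^2 := by
  have step : ∀ η : ℝ, 0 < η → L * ∑ n ∈ Finset.range M, W n * sC F n ^ 2 ≤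
      (2/π) * ((1+η) * (∫ x in (0:ℝ)..π, U x ^ (2*s) * F x^2)) := by
    intro η hη
    have hlim : Tendsto (fun N : ℕ => (2/π) * ((1+η) * (∫ x in (0:ℝ)..π, U x ^ (2*s) * F x^2) + (1+1/η) * 2^(2*s) *
      ∫ x in (0:ℝ)..π, (F x - ∑ n ∈ Finset.range N, sC F n * Real.sin (n*x))^2)) atTop
      (𝓝 ((2/π) * ((1+η) * (∫ x in (0:ℝ)..π, U x ^ (2*s) * F x^2) + (1+1/η) * 2^(2*s) * 0))) :=
      ((((L2_conv hF ho).const_mul _).const_add _).const_mul _)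
    rw [mul_zero, add_zero] at hlim
    refine ge_of_tendsto hlim ?_
    filter_upwards [eventually_ge_atTop M] with N hN
    have hq := h (fun n => if n ∈ Finset.range N then sC F n else 0) (by simp [sC_zero])
      ((Finset.range N).finite_toSet.subset (by
        intro n hn; by_contra hc; apply hn; simp only [Finset.mem_coe] at hc; simp [hc]))
      (by intro n hn; simp [hK n hn])
    rw [Qform_eq hs _ (Finset.range N) (by intro n hn; simp only [hn, if_false])] at hq
    rw [tsum_eq_sum (s := Finset.range N) (by intro n hn; simp only [hn, if_false]; ring)] at hq
    have e1 : ∑ n ∈ Finset.range N, W n * (if n ∈ Finset.range N then sC F n else 0)^2 =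
      ∑ n ∈ Finset.range N, W n * sC F n ^ 2 := by
      refine Finset.sum_congr rfl fun n hn => ?_
      rw [if_pos hn]
    have e2 : ∀ x : ℝ, ∑ n ∈ Finset.range N, (if n ∈ Finset.range N then sC F n else 0) * Real.sin (n*x) =
      F x - (F x - ∑ n ∈ Finset.range N, sC F n * Real.sin (n*x)) := by
      intro x
      rw [sub_sub_cancel]
      refine Finset.sum_congr rfl fun n hn => ?_
      rw [if_pos hn]
    rw [e1] at hq
    simp_rw [e2] at hq
    have hy := U_int_young (F := F) (G := fun x => F x - ∑ n ∈ Finset.range N, sC F n * Real.sin (n*x)) hs hη hF (by fun_prop)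
    have hmono : ∑ n ∈ Finset.range M, W n * sC F n ^ 2 ≤ ∑ n ∈ Finset.range N, W n * sC F n ^ 2 := by
      apply Finset.sum_le_sum_of_subset_of_nonneg (Finset.range_mono hN)
      intro n _ _
      rcases Nat.eq_zero_or_pos n with h0 | h0
      · subst h0; simp [sC_zero]
      · exact mul_nonneg (hW n h0) (sq_nonneg _)
    calc _ ≤ L * ∑ n ∈ Finset.range N, W n * sC F n ^ 2 := by gcongr
      _ ≤ _ := hq
      _ ≤ _ := by gcongr
  have hlim : Tendsto (fun η : ℝ => (2/π) * ((1+η) * (∫ x in (0:ℝ)..π, U x ^ (2*s) * F x^2))) (𝓝[>] 0)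
     (𝓝 ((2/π) * ((1+0) * (∫ x in (0:ℝ)..π, U x ^ (2*s) * F x^2)))) := by
    apply Tendsto.mono_left _ nhdsWithin_le_nhds
    apply Continuous.tendsto (f := fun η : ℝ => (2/π) * ((1+η) * (∫ x in (0:ℝ)..π, U x ^ (2*s) * F x^2)))
    fun_prop
  rw [add_zero, one_mul] at hlim
  refine ge_of_tendsto hlim ?_
  filter_upwards [self_mem_nhdsWithin] with η hη
  exact step η hη

lemma abs_sin_nat_le (n : ℕ) (x : ℝ) : |Real.sin (n*x)| ≤ n * |Real.sin x| := by
  induction n with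
  | zero => simp
  | succ n ih =>
    have e : ((n+1:ℕ):ℝ) * x = n*x + x := by push_cast; ring
    rw [e, Real.sin_add]
    have h1 := Real.abs_cos_le_one x
    have h2 := Real.abs_cos_le_one (n*x)
    calc _ ≤ |Real.sin (n*x) * Real.cos x| + |Real.cos (n*x) * Real.sin x| := abs_add_le _ _
      _ = |Real.sin (n*x)| * |Real.cos x| + |Real.cos (n*x)| * |Real.sin x| := by rw [abs_mul, abs_mul]
      _ ≤ |Real.sin (n*x)| * 1 + 1 * |Real.sin x| := by gcongr
      _ ≤ _ := by push_cast; linarith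

/-- limiting sine moments -/
noncomputable def SI (β : ℝ) (n : ℕ) : ℝ := ∫ x in (0:ℝ)..π, U x ^ (-(2*β)) * (Real.sin x * Real.sin (n*x))

lemma SI_bound {β x : ℝ} (h0 : 0 < x) (h1 : x ≤ π) (n : ℕ) :
    ‖U x ^ (-(2*β)) * (Real.sin x * Real.sin (n*x))‖ ≤ n * U x ^ (2*(1-β)) := by
  have hU := U_pos h0 h1
  have hs := abs_sin_nat_le n x
  have hsx : |Real.sin x| ≤ U x := by
    rw [sin_eq_U, abs_mul, abs_of_pos hU]
    have := Real.abs_cos_le_one (x/2)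
    nlinarith
  rw [norm_mul, Real.norm_of_nonneg (Real.rpow_nonneg hU.le _), Real.norm_eq_abs, abs_mul]
  have e : U x ^ (2*(1-β)) = U x ^ (-(2*β)) * (U x * U x) := by
    rw [show 2*(1-β) = -(2*β) + 1 + 1 by ring, Real.rpow_add_one hU.ne', Real.rpow_add_one hU.ne']; ring
  rw [e]
  have hp : 0 ≤ U x ^ (-(2*β)) := Real.rpow_nonneg hU.le _
  calc _ ≤ U x ^ (-(2*β)) * (U x * (n * U x)) := by
        gcongr
        exact hs.trans (by gcongr)
    _ = _ := by ring

lemma SI_integrable {β : ℝ} (hβ : β < 3/2) (n : ℕ) :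
    IntervalIntegrable (fun x => U x ^ (-(2*β)) * (Real.sin x * Real.sin (n*x))) volume 0 π := by
  have h1 : IntervalIntegrable (fun x => (n:ℝ) * U x ^ (2*(1-β))) volume 0 π :=
    (U_rpow_integrable (by linarith)).const_mul _
  refine h1.mono_fun ?_ ?_
  · apply Measurable.aestronglyMeasurable
    exact (U_cont.measurable.pow_const _).mul (by fun_prop)
  · refine (ae_restrict_iff' measurableSet_uIoc).2 (Filter.Eventually.of_forall fun x hx => ?_)
    rw [uIoc_of_le Real.pi_pos.le] at hx
    exact (SI_bound hx.1 hx.2 n).trans (le_abs_self _)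

lemma SI_ibp {β : ℝ} (hβ : β < 3/2) (n : ℕ) :
    (2*(1-β)) * SI β n + n * cI (1-β) n = 0 := by
  have hi1 := (SI_integrable hβ n).const_mul (2*(1-β))
  have hi2 : IntervalIntegrable (fun x => (n:ℝ) * (U x ^ (2*(1-β)) * Real.cos (n*x))) volume 0 π :=
    (U_mul_integrable (by linarith) (by fun_prop)).const_mul _
  have h := intervalIntegral.integral_eq_sub_of_hasDerivAt_of_le (a := 0) (b := π)
    (f := fun x => U x ^ (2*(1-β)) * Real.sin (n*x))
    (f' := fun x => (2*(1-β)) * (U x ^ (-(2*β)) * (Real.sin x * Real.sin (n*x)))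
       + n * (U x ^ (2*(1-β)) * Real.cos (n*x)))
    Real.pi_pos.le ?_ ?_ (hi1.add hi2)
  · rw [intervalIntegral.integral_add hi1 hi2, intervalIntegral.integral_const_mul,
      intervalIntegral.integral_const_mul, Real.sin_nat_mul_pi] at h
    simp only [mul_zero, Real.sin_zero, sub_zero] at h
    exact h
  · intro x hx
    rcases hx.1.eq_or_lt with h | h
    · subst h
      unfold ContinuousWithinAt
      simp only [mul_zero, Real.sin_zero]
      have hz : Tendsto (fun x => (n:ℝ) * U x ^ (2*(1-β)+1)) (𝓝[Icc 0 π] 0) (𝓝 0) := by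
        have hc : Continuous fun x => (n:ℝ) * U x ^ (2*(1-β)+1) :=
          continuous_const.mul (U_cont.rpow_const (fun x => Or.inr (by linarith)))
        have := (hc.tendsto 0).mono_left (nhdsWithin_le_nhds (s := Icc 0 π))
        rwa [U_zero, Real.zero_rpow (by linarith), mul_zero] at this
      apply squeeze_zero_norm' _ hz
      filter_upwards [self_mem_nhdsWithin] with y hy
      rcases hy.1.eq_or_lt with h | h
      · subst h; simp [U_zero, Real.zero_rpow (show 2*(1-β)+1 ≠ 0 by linarith)]
      · have hU := U_pos h hy.2
        rw [norm_mul, Real.norm_of_nonneg (Real.rpow_nonneg hU.le _), Real.norm_eq_abs, Real.rpow_add_one hU.ne']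
        have hsx : |Real.sin y| ≤ U y := by
          rw [sin_eq_U, abs_mul, abs_of_pos hU]
          have := Real.abs_cos_le_one (y/2)
          nlinarith
        have hs := (abs_sin_nat_le n y).trans (mul_le_mul_of_nonneg_left hsx (Nat.cast_nonneg n))
        have hp : 0 ≤ U y ^ (2*(1-β)) := Real.rpow_nonneg hU.le _
        calc _ ≤ U y ^ (2*(1-β)) * (n * U y) := by gcongr
          _ = _ := by ring
    · have hU := U_pos h hx.2
      apply ContinuousAt.continuousWithinAt
      exact (U_cont.continuousAt.rpow_const (Or.inl hU.ne')).mul (by fun_prop)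
  · intro x hx
    have hU := U_pos hx.1 hx.2.le
    have h1 := (U_deriv x).rpow_const (p := 2*(1-β)) (Or.inl hU.ne')
    have h2 : HasDerivAt (fun x : ℝ => (n:ℝ)*x) ((n:ℝ) * 1) x := (hasDerivAt_id x).const_mul _
    refine (h1.mul h2.sin).congr_deriv ?_
    rw [show 2*(1-β)-1 = -(2*β)+1 by ring, Real.rpow_add_one hU.ne', sin_eq_U x]
    ring

/-- the constant -/
noncomputable def Dc (β : ℝ) : ℝ := √π / 2 * 4^(1-β) * Real.Gamma (3/2-β) / Real.Gamma β

lemma cI_neg {β : ℝ} (h0 : 0 < β) (hβ : β < 3/2) (n : ℕ) :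
    cI (1-β) (n+1) = -(2*(1-β)) * (Dc β * (Real.Gamma (n+β) / Real.Gamma (n+3-β))) := by
  induction n with
  | zero =>
    have h := cI_succ (s := 1-β) (by linarith) 0
    rw [cI_zero (by linarith)] at h
    have hg : 0 < Real.Gamma β := Real.Gamma_pos_of_pos h0
    have hg2 : 0 < Real.Gamma (2-β) := Real.Gamma_pos_of_pos (by linarith)
    have hg3 : Real.Gamma (3-β) = (2-β) * Real.Gamma (2-β) := by
      rw [← Real.Gamma_add_one (by linarith)]; congr 1; ring
    have hne : 2 - β ≠ 0 := by linarith
    simp only [Nat.cast_zero, zero_add, Dc] at h ⊢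
    rw [hg3]
    rw [show 1 - β + 1/2 = 3/2-β by ring, show 1-β+1 = 2-β by ring, show (1-β+0+1) = 2-β by ring] at h
    apply mul_left_cancel₀ hne
    rw [h]
    field_simp
    ring
  | succ n ih =>
    have h := cI_succ (s := 1-β) (by linarith) (n+1)
    rw [ih] at h
    push_cast at h ⊢
    have hn0 : (0:ℝ) ≤ n := Nat.cast_nonneg n
    have hne : 1 - β + (n+1) + 1 ≠ 0 := by apply ne_of_gt; linarith
    apply mul_left_cancel₀ hne
    rw [h]
    have e1 : Real.Gamma (n+1+β) = (n+β) * Real.Gamma (n+β) := by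
      rw [← Real.Gamma_add_one (by positivity)]; congr 1; ring
    have hn3 : (n:ℝ)+3-β ≠ 0 := by apply ne_of_gt; linarith
    have e2 : Real.Gamma (n+1+3-β) = (n+3-β) * Real.Gamma (n+3-β) := by
      rw [← Real.Gamma_add_one hn3]; congr 1; ring
    rw [e1, e2]
    have : Real.Gamma (n+3-β) ≠ 0 := (Real.Gamma_pos_of_pos (by linarith)).ne'
    field_simp
    ring

lemma SI_eq {β : ℝ} (h0 : 0 < β) (hβ : β < 3/2) (h1 : β ≠ 1) {n : ℕ} (hn : 1 ≤ n) :
    SI β n = Dc β * (n * Real.Gamma (n+β-1) / Real.Gamma (n+2-β)) := by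
  obtain ⟨m, rfl⟩ := Nat.exists_eq_add_of_le' hn
  have h := SI_ibp hβ (m+1)
  rw [cI_neg h0 hβ] at h
  have hne : 2*(1-β) ≠ 0 := by
    intro h; apply h1; linarith
  apply mul_left_cancel₀ hne
  push_cast at h ⊢
  rw [show (m:ℝ)+1+β-1 = m+β by ring, show (m:ℝ)+1+2-β = m+3-β by ring]
  linear_combination h

/-- regularized test function -/
noncomputable def Fd (β δ x : ℝ) : ℝ := Real.sin x * (2 - 2 * Real.cos x + δ) ^ (-β)

lemma Fd_cont {β δ : ℝ} (hδ : 0 < δ) : Continuous (Fd β δ) := by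
  unfold Fd
  apply Continuous.mul (by fun_prop)
  apply Continuous.rpow_const (by fun_prop)
  intro x; left
  have := Real.cos_le_one x
  linarith

lemma Fd_odd (β δ x : ℝ) : Fd β δ (-x) = - Fd β δ x := by
  simp [Fd]

lemma U_rpow_sq {β x : ℝ} (hx : 0 ≤ U x) : U x ^ (-(2*β)) = (2 - 2 * Real.cos x) ^ (-β) := by
  rw [← U_sq, ← Real.rpow_natCast, ← Real.rpow_mul hx]; congr 1; push_cast; ring

lemma Fd_le {β δ x : ℝ} (hβ : 0 < β) (hδ : 0 < δ) (h0 : 0 < x) (h1 : x ≤ π) :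
    |Fd β δ x| ≤ U x ^ (-(2*β)) * Real.sin x := by
  have hU := U_pos h0 h1
  have hs := Real.sin_nonneg_of_nonneg_of_le_pi h0.le h1
  have hp : 0 < 2 - 2 * Real.cos x := by rw [← U_sq]; positivity
  rw [U_rpow_sq hU.le, Fd, abs_of_nonneg (mul_nonneg hs (Real.rpow_nonneg (by linarith) _)), mul_comm]
  apply mul_le_mul_of_nonneg_right _ hs
  exact Real.rpow_le_rpow_of_nonpos hp (by linarith) (by linarith)

lemma Fd_lim {β : ℝ} (hβ0 : 0 < β) (hβ : β < 3/2) (n : ℕ) :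
    Tendsto (fun δ => sC (Fd β δ) n) (𝓝[>] 0) (𝓝 ((2/π) * SI β n)) := by
  unfold sC SI
  apply Tendsto.const_mul
  refine intervalIntegral.tendsto_integral_filter_of_dominated_convergence
    (fun x => (n:ℝ) * U x ^ (2*(1-β))) ?_ ?_ ?_ ?_
  · filter_upwards [self_mem_nhdsWithin] with δ hδ
    exact ((Fd_cont hδ).mul (by fun_prop)).aestronglyMeasurable
  · filter_upwards [self_mem_nhdsWithin] with δ hδ
    refine Filter.Eventually.of_forall fun x hx => ?_
    rw [uIoc_of_le Real.pi_pos.le] at hx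
    refine le_trans ?_ (SI_bound hx.1 hx.2 n)
    have hs := Real.sin_nonneg_of_nonneg_of_le_pi hx.1.le hx.2
    have hp : 0 ≤ U x ^ (-(2*β)) := Real.rpow_nonneg (U_pos hx.1 hx.2).le _
    rw [← mul_assoc, norm_mul, norm_mul (U x ^ (-(2*β)) * Real.sin x), Real.norm_of_nonneg (mul_nonneg hp hs)]
    exact mul_le_mul_of_nonneg_right (Fd_le hβ0 hδ hx.1 hx.2) (norm_nonneg _)
  · exact (U_rpow_integrable (by linarith)).const_mul _
  · refine Filter.Eventually.of_forall fun x hx => ?_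
    rw [uIoc_of_le Real.pi_pos.le] at hx
    have hU := U_pos hx.1 hx.2
    have hp : 0 < 2 - 2 * Real.cos x := by rw [← U_sq]; positivity
    rw [U_rpow_sq hU.le, ← mul_assoc, mul_comm _ (Real.sin x)]
    apply Tendsto.mul_const
    unfold Fd
    apply Tendsto.const_mul
    apply Tendsto.mono_left _ nhdsWithin_le_nhds
    have : ContinuousAt (fun δ : ℝ => (2 - 2 * Real.cos x + δ) ^ (-β)) 0 := by
      apply ContinuousAt.rpow_const (by fun_prop)
      left; linarith
    simpa [ContinuousAt] using this

lemma sC_Fd_bound {β δ : ℝ} (hβ0 : 0 < β) (hβ : β < 3/2) (hδ : 0 < δ) (n : ℕ) :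
    |sC (Fd β δ) n| ≤ (2/π) * (n * SI β 1) := by
  unfold sC SI
  rw [abs_mul, abs_of_pos (by have := Real.pi_pos; positivity)]
  apply mul_le_mul_of_nonneg_left _ (by have := Real.pi_pos; positivity)
  rw [← intervalIntegral.integral_const_mul]
  rw [← Real.norm_eq_abs]
  refine intervalIntegral.norm_integral_le_of_norm_le Real.pi_pos.le ?_ ((SI_integrable hβ 1).const_mul _)
  refine Filter.Eventually.of_forall fun x hx => ?_
  have hs := Real.sin_nonneg_of_nonneg_of_le_pi hx.1.le hx.2
  have h1 := Fd_le (β := β) hβ0 hδ hx.1 hx.2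
  have h2 := abs_sin_nat_le n x
  have hp : 0 ≤ U x ^ (-(2*β)) := Real.rpow_nonneg (U_pos hx.1 hx.2).le _
  rw [abs_of_nonneg hs] at h2
  rw [norm_mul, Real.norm_eq_abs, Real.norm_eq_abs]
  calc _ ≤ (U x ^ (-(2*β)) * Real.sin x) * (n * Real.sin x) := by gcongr
    _ = _ := by simp; ring

lemma Fd_energy {β δ s p : ℝ} (hβ0 : 0 < β) (hs : 0 < s) (hδ : 0 < δ) (hp : 0 < p) (hpe : p = 2*s+3-4*β) :
    ∫ x in (0:ℝ)..π, U x ^ (2*s) * Fd β δ x ^ 2 ≤ 2^p / p := by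
  have hint : IntervalIntegrable (fun x => U x ^ (p-1) * Real.cos (x/2)) volume 0 π :=
    U_mul_integrable (by linarith) (by fun_prop)
  have h := intervalIntegral.integral_eq_sub_of_hasDerivAt_of_le (a := 0) (b := π)
    (f := fun x => U x ^ p / p) (f' := fun x => U x ^ (p-1) * Real.cos (x/2)) Real.pi_pos.le ?_ ?_ hint
  · rw [U_pi, U_zero, Real.zero_rpow hp.ne', zero_div, sub_zero] at h
    rw [← h]
    have hc : Continuous fun x => U x ^ (2*s) := U_cont.rpow_const (fun x => Or.inr (by linarith))
    have hF := Fd_cont (β := β) hδ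
    apply intervalIntegral.integral_mono_on_of_le_Ioo Real.pi_pos.le _ hint
    · intro x hx
      have hU := U_pos hx.1 hx.2.le
      have h1 := Fd_le (β := β) hβ0 hδ hx.1 hx.2.le
      have hcos : 0 ≤ Real.cos (x/2) := Real.cos_nonneg_of_mem_Icc ⟨by linarith [hx.1, Real.pi_pos], by linarith [hx.2]⟩
      have hcos1 := Real.cos_le_one (x/2)
      have h2 : Fd β δ x ^ 2 ≤ (U x ^ (-(2*β)) * Real.sin x)^2 := by
        rw [← sq_abs]; gcongr
      have hpp : 0 ≤ U x ^ (2*s) := Real.rpow_nonneg hU.le _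
      calc _ ≤ U x ^ (2*s) * (U x ^ (-(2*β)) * Real.sin x)^2 := by gcongr
        _ = U x ^ (p-1) * (Real.cos (x/2) * Real.cos (x/2)) := by
          rw [sin_eq_U, show p - 1 = 2*s + (-(2*β)) + (-(2*β)) + 1 + 1 by rw [hpe]; ring,
            Real.rpow_add_one hU.ne', Real.rpow_add_one hU.ne', Real.rpow_add hU, Real.rpow_add hU]
          ring
        _ ≤ _ := by
          have : 0 ≤ U x ^ (p-1) := Real.rpow_nonneg hU.le _
          gcongr
          nlinarith
    · apply Continuous.intervalIntegrable; fun_prop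
  · exact ((U_cont.rpow_const (fun x => Or.inr hp.le)).div_const _).continuousOn
  · intro x hx
    have hU := U_pos hx.1 hx.2.le
    refine (((U_deriv x).rpow_const (p := p) (Or.inl hU.ne')).div_const p).congr_deriv ?_
    field_simp

lemma trig_sum_sq (K : Finset ℕ) (a b : ℕ → ℝ) (hab : ∀ k ∈ K, |a k| ≤ b k) :
    ∫ x in (0:ℝ)..π, (∑ k ∈ K, a k * Real.sin (k*x))^2 ≤ π * (∑ k ∈ K, b k)^2 := by
  have : ∫ x in (0:ℝ)..π, (∑ k ∈ K, b k)^2 = π * (∑ k ∈ K, b k)^2 := by simp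
  rw [← this]
  apply intervalIntegral.integral_mono_on Real.pi_pos.le
  · apply Continuous.intervalIntegrable; fun_prop
  · simp
  · intro x _
    rw [← sq_abs]
    gcongr
    refine (Finset.abs_sum_le_sum_abs _ _).trans (Finset.sum_le_sum fun k hk => ?_)
    rw [abs_mul]
    have := Real.abs_sin_le_one (k*x)
    have := hab k hk
    nlinarith [abs_nonneg (a k), abs_nonneg (Real.sin (k*x))]

lemma gaut {x a : ℝ} (hx : 0 < x) (ha : 0 ≤ a) (ha1 : a ≤ 1) :
    Real.Gamma (x + a) ≤ x^a * Real.Gamma x := by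
  rcases ha.eq_or_lt with h | h
  · subst h; simp
  rcases ha1.eq_or_lt with h1 | h1
  · subst h1; rw [Real.Gamma_add_one hx.ne']; simp
  have hg := Real.Gamma_pos_of_pos hx
  have := Real.Gamma_mul_add_mul_le_rpow_Gamma_mul_rpow_Gamma hx (show 0 < x+1 by linarith)
    (show 0 < 1 - a by linarith) h (by ring)
  rw [show (1-a)*x + a*(x+1) = x + a by ring, Real.Gamma_add_one hx.ne', Real.mul_rpow hx.le hg.le] at this
  refine this.trans (le_of_eq ?_)
  rw [mul_left_comm, ← Real.rpow_add hg]
  simp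

lemma gautX {x a X : ℝ} (hx : 0 < x) (ha : 0 ≤ a) (ha1 : a ≤ 1) (hX : x ≤ X) :
    Real.Gamma (x + a) ≤ X^a * Real.Gamma x := by
  have hg := Real.Gamma_pos_of_pos hx
  exact (gaut hx ha ha1).trans (by gcongr)

lemma gaut2 {x a X : ℝ} (hx : 0 < x) (ha : 0 ≤ a) (ha1 : a ≤ 1) (hX : x + a ≤ X) :
    Real.Gamma (x + 2*a) ≤ X^(2*a) * Real.Gamma x := by
  have h1 := gautX (x := x+a) (a := a) (X := X) (by linarith) ha ha1 hX
  have h2 := gautX (x := x) (a := a) (X := X) hx ha ha1 (by linarith)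
  have hX0 : 0 < X := by linarith
  rw [show x + 2*a = x + a + a by ring, two_mul, Real.rpow_add hX0]
  calc _ ≤ _ := h1
    _ ≤ X^a * (X^a * Real.Gamma x) := by gcongr
    _ = _ := by ring

/-- leading constant of the weight -/
noncomputable def Cc (σ : ℝ) : ℝ :=
  4^σ * (Real.Gamma ((3+2*σ)/4) / Real.Gamma (3/2 - (3+2*σ)/4))^2

lemma W_eq (σ : ℝ) (n : ℕ) : Wweight σ ((3+2*σ)/4) n = Cc σ *
    (Real.Gamma (n + 1/2 - (3+2*σ)/4) * Real.Gamma (n + 2 - (3+2*σ)/4) /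
      (Real.Gamma (n + (3+2*σ)/4 + 1/2) * Real.Gamma (n + (3+2*σ)/4 - 1))) := by
  unfold Wweight Cc
  rw [show (3/2 - (3+2*σ)/4 + σ) = (3+2*σ)/4 by ring, show ((3+2*σ)/4 - σ) = 3/2 - (3+2*σ)/4 by ring,
    show (n:ℝ) + (3+2*σ)/4 - σ - 1 = n + 1/2 - (3+2*σ)/4 by ring,
    show (n:ℝ) - (3+2*σ)/4 + 2 = n + 2 - (3+2*σ)/4 by ring,
    show (n:ℝ) - (3+2*σ)/4 + σ + 2 = n + (3+2*σ)/4 + 1/2 by ring]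
  rw [div_pow, ← sq, ← sq]

lemma Cc_nonneg (σ : ℝ) : 0 ≤ Cc σ := by unfold Cc; positivity

lemma W_nonneg {σ : ℝ} (h0 : 0 < σ) (h1 : σ ≤ 1) (n : ℕ) (hn : 1 ≤ n) :
    0 ≤ Wweight σ ((3+2*σ)/4) n := by
  rw [W_eq]
  have hn' : (1:ℝ) ≤ n := by exact_mod_cast hn
  have := Cc_nonneg σ
  have g1 := Real.Gamma_pos_of_pos (show 0 < (n:ℝ) + 1/2 - (3+2*σ)/4 by linarith)
  have g2 := Real.Gamma_pos_of_pos (show 0 < (n:ℝ) + 2 - (3+2*σ)/4 by linarith)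
  have g3 := Real.Gamma_pos_of_pos (show 0 < (n:ℝ) + (3+2*σ)/4 + 1/2 by linarith)
  have g4 := Real.Gamma_pos_of_pos (show 0 < (n:ℝ) + (3+2*σ)/4 - 1 by linarith)
  positivity

lemma W_low {σ p : ℝ} (h0 : 0 < σ) (h1 : σ ≤ 1) (hp : 0 < p) (hp1 : p ≤ 1/4) (n : ℕ) (hn : 1 ≤ n) :
    Cc σ * (n^2 * ((n:ℝ)+2)^(-(3+p))) ≤ Wweight σ ((3+2*σ)/4) n *
      (n * Real.Gamma (n + ((3+2*σ)/4 - p/4) - 1) / Real.Gamma (n + 2 - ((3+2*σ)/4 - p/4)))^2 := by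
  rw [W_eq, mul_assoc]
  apply mul_le_mul_of_nonneg_left _ (Cc_nonneg σ)
  have hn' : (1:ℝ) ≤ n := by exact_mod_cast hn
  set α := (3+2*σ)/4 with hα
  set β := α - p/4 with hβ
  set X : ℝ := n + 2 with hX
  have hX0 : 0 < X := by linarith
  have g1 := Real.Gamma_pos_of_pos (show 0 < (n:ℝ) + 1/2 - α by linarith)
  have g2 := Real.Gamma_pos_of_pos (show 0 < (n:ℝ) + 2 - α by linarith)
  have g3 := Real.Gamma_pos_of_pos (show 0 < (n:ℝ) + α + 1/2 by linarith)
  have g4 := Real.Gamma_pos_of_pos (show 0 < (n:ℝ) + α - 1 by linarith)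
  have g5 := Real.Gamma_pos_of_pos (show 0 < (n:ℝ) + β - 1 by linarith)
  have g6 := Real.Gamma_pos_of_pos (show 0 < (n:ℝ) + 2 - β by linarith)
  have A1 : Real.Gamma (n+α+1/2) ≤ X^(2*α) * Real.Gamma (n+1/2-α) := by
    have h := gaut2 (x := n+1/2-α) (a := α-1/2) (X := X) (by linarith) (by linarith) (by linarith) (by linarith)
    rw [show (n:ℝ)+1/2-α + 2*(α-1/2) = n+α-1/2 by ring] at h
    rw [show (n:ℝ)+α+1/2 = n+α-1/2+1 by ring, Real.Gamma_add_one (by linarith),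
      show 2*α = 2*(α-1/2) + 1 by ring, Real.rpow_add_one hX0.ne']
    have g7 := Real.Gamma_pos_of_pos (show 0 < (n:ℝ) + α -1/2 by linarith)
    calc _ ≤ X * (X ^ (2*(α-1/2)) * Real.Gamma (n+1/2-α)) := by
          apply mul_le_mul (by linarith) h g7.le hX0.le
      _ = _ := by ring
  have A2 : Real.Gamma (n+2-β) ≤ X^(3-2*β) * Real.Gamma (n+β-1) := by
    have h := gaut2 (x := n+β-1) (a := 3/2-β) (X := X) (by linarith) (by linarith) (by linarith) (by linarith)
    rw [show (n:ℝ)+β-1 + 2*(3/2-β) = n+2-β by ring, show 2*(3/2-β) = 3-2*β by ring] at h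
    exact h
  have A3 : Real.Gamma (n+2-β) ≤ X^(p/4) * Real.Gamma (n+2-α) := by
    have h := gautX (x := n+2-α) (a := p/4) (X := X) (by linarith) (by linarith) (by linarith) (by linarith)
    rwa [show (n:ℝ)+2-α+p/4 = n+2-β by rw [hβ]; ring] at h
  have A4 : Real.Gamma (n+α-1) ≤ X^(p/4) * Real.Gamma (n+β-1) := by
    have h := gautX (x := n+β-1) (a := p/4) (X := X) (by linarith) (by linarith) (by linarith) (by linarith)
    rwa [show (n:ℝ)+β-1+p/4 = n+α-1 by rw [hβ]; ring] at h
  have hmul : (Real.Gamma (n+α+1/2) * Real.Gamma (n+α-1)) * (Real.Gamma (n+2-β) * Real.Gamma (n+2-β)) ≤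
      ((X^(2*α) * Real.Gamma (n+1/2-α)) * (X^(p/4) * Real.Gamma (n+β-1))) *
       ((X^(3-2*β) * Real.Gamma (n+β-1)) * (X^(p/4) * Real.Gamma (n+2-α))) := by
    gcongr
  have hpow : X^(2*α) * X^(p/4) * X^(3-2*β) * X^(p/4) = X^(3+p) := by
    rw [← Real.rpow_add hX0, ← Real.rpow_add hX0, ← Real.rpow_add hX0]
    congr 1; rw [hβ]; ring
  have hXp : 0 < X^(3+p) := by positivity
  rw [Real.rpow_neg hX0.le, div_pow, div_mul_div_comm, ← div_eq_mul_inv, div_le_div_iff₀ hXp (by positivity)]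
  have e : ((X^(2*α) * Real.Gamma (n+1/2-α)) * (X^(p/4) * Real.Gamma (n+β-1))) *
       ((X^(3-2*β) * Real.Gamma (n+β-1)) * (X^(p/4) * Real.Gamma (n+2-α))) =
       X^(3+p) * (Real.Gamma (n+1/2-α) * Real.Gamma (n+2-α) * Real.Gamma (n+β-1)^2) := by
    rw [← hpow]; ring
  rw [e] at hmul
  have hn2 : (0:ℝ) ≤ (n:ℝ)^2 := by positivity
  have := mul_le_mul_of_nonneg_left hmul hn2
  linarith

lemma Cc_Dc {σ : ℝ} (h0 : 0 < σ) (h1 : σ ≤ 1) : Dc ((3+2*σ)/4)^2 * Cc σ = π/2 := by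
  unfold Dc Cc
  have g1 := Real.Gamma_pos_of_pos (show 0 < (3+2*σ)/4 by linarith)
  have g2 := Real.Gamma_pos_of_pos (show 0 < 3/2 - (3+2*σ)/4 by linarith)
  have e : (4:ℝ)^(1-(3+2*σ)/4) * 4^(1-(3+2*σ)/4) * 4^σ = 2 := by
    rw [← Real.rpow_add (by norm_num), ← Real.rpow_add (by norm_num),
      show 1 - (3+2*σ)/4 + (1 - (3+2*σ)/4) + σ = 1/2 by ring, ← Real.sqrt_eq_rpow,
      show (4:ℝ) = 2^2 by norm_num, Real.sqrt_sq (by norm_num)]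
  have hp : √π ^ 2 = π := Real.sq_sqrt Real.pi_pos.le
  generalize Real.Gamma ((3+2*σ)/4) = A at *
  generalize Real.Gamma (3/2 - (3+2*σ)/4) = B at *
  generalize (4:ℝ)^(1-(3+2*σ)/4) = C at *
  have : (√π / 2 * C * B / A)^2 * (4^σ * (A/B)^2) = √π^2 / 4 * (C*C*4^σ) := by
    field_simp
    ring
  rw [this, e, hp]; ring

lemma term_low {p : ℝ} (hp : 0 < p) (n : ℕ) :
    1/((n:ℝ)+2)^(1+p) - 4 * (1/((n:ℝ)+2)^(2:ℝ)) ≤ n^2 * ((n:ℝ)+2)^(-(3+p)) := by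
  set X : ℝ := n + 2 with hX
  have hn : (0:ℝ) ≤ n := Nat.cast_nonneg n
  have hX0 : 0 < X := by linarith
  have hX1 : 1 ≤ X := by linarith
  have e1 : 1/X^(1+p) = X^2 * X^(-(3+p)) := by
    rw [one_div, ← Real.rpow_neg hX0.le, ← Real.rpow_natCast, ← Real.rpow_add hX0]; congr 1; push_cast; ring
  have e2 : X * X^(-(3+p)) ≤ 1/X^(2:ℝ) := by
    rw [one_div, ← Real.rpow_neg hX0.le]
    nth_rewrite 1 [← Real.rpow_one X]
    rw [← Real.rpow_add hX0]
    apply Real.rpow_le_rpow_of_exponent_le hX1; linarith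
  have hY : 0 ≤ X^(-(3+p)) := by positivity
  have hnX : (n:ℝ) = X - 2 := by linarith
  rw [e1, hnX]
  nlinarith

lemma main_ineq {σ L p η : ℝ} (h0 : 0 < σ) (h1 : σ ≤ 1) (hL : 0 ≤ L) (K : Finset ℕ)
    (h : ∀ f : ℕ → ℝ, f 0 = 0 → (Function.support f).Finite → (∀ n ∈ K, f n = 0) →
      L * (∑' n : ℕ, Wweight σ ((3 + 2 * σ) / 4) n * (f n) ^ 2) ≤ Qform σ f)
    (hp : 0 < p) (hp1 : p ≤ 1/4) (hη : 0 < η) (hne : (3+2*σ)/4 - p/4 ≠ 1) (M : ℕ) :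
    L * ∑ n ∈ Finset.range M, Wweight σ ((3+2*σ)/4) n *
        (if n ∈ K then 0 else (2/π) * SI ((3+2*σ)/4 - p/4) n)^2 ≤
      (2/π) * ((1+η) * (2^p/p) + (1+1/η) * 2^(2*σ) *
        (π * (∑ k ∈ K, (2/π) * (k * SI ((3+2*σ)/4 - p/4) 1))^2)) := by
  set β := (3+2*σ)/4 - p/4 with hβ
  have hβ0 : 0 < β := by linarith
  have hβ1 : β < 3/2 := by linarith
  have hlim : Tendsto (fun δ => L * ∑ n ∈ Finset.range M, Wweight σ ((3+2*σ)/4) n *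
        (if n ∈ K then 0 else sC (Fd β δ) n)^2) (𝓝[>] 0)
      (𝓝 (L * ∑ n ∈ Finset.range M, Wweight σ ((3+2*σ)/4) n *
        (if n ∈ K then 0 else (2/π) * SI β n)^2)) := by
    apply Tendsto.const_mul
    apply tendsto_finsetSum
    intro n _
    apply Tendsto.const_mul
    apply Tendsto.pow
    split_ifs
    · exact tendsto_const_nhds
    · exact Fd_lim hβ0 hβ1 n
  refine le_of_tendsto hlim ?_
  filter_upwards [self_mem_nhdsWithin] with δ hδ
  have hδ : 0 < δ := hδ
  have hFc := Fd_cont (β := β) hδ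
  have hcoef : ∀ n, sC (fun x => Fd β δ x - ∑ k ∈ K, sC (Fd β δ) k * Real.sin (k*x)) n =
      if n ∈ K then 0 else sC (Fd β δ) n := by
    intro n
    have hs := sC_sum K (sC (Fd β δ)) (sC_zero _) n
    have : sC (fun x => Fd β δ x - ∑ k ∈ K, sC (Fd β δ) k * Real.sin (k*x)) n =
       sC (Fd β δ) n - sC (fun x => ∑ k ∈ K, sC (Fd β δ) k * Real.sin (k*x)) n := by
      simp only [sC, sub_mul]
      rw [intervalIntegral.integral_sub]
      · ring
      · apply Continuous.intervalIntegrable; fun_prop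
      · apply Continuous.intervalIntegrable; fun_prop
    rw [this, hs]
    split_ifs <;> simp
  have hA := claimA h0 (Wweight σ ((3+2*σ)/4)) (W_nonneg h0 h1) hL K h
    (F := fun x => Fd β δ x - ∑ k ∈ K, sC (Fd β δ) k * Real.sin (k*x)) (by fun_prop)
    (by
      intro x
      rw [Fd_odd]
      simp only [mul_neg, Real.sin_neg, Finset.sum_neg_distrib]; ring)
    (by intro n hn; rw [hcoef, if_pos hn]) M
  simp_rw [hcoef] at hA
  refine hA.trans ?_
  have hpi := Real.pi_pos
  apply mul_le_mul_of_nonneg_left _ (by positivity)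
  have hy := U_int_young (F := Fd β δ) (G := fun x => ∑ k ∈ K, sC (Fd β δ) k * Real.sin (k*x)) h0 hη hFc (by fun_prop)
  refine hy.trans ?_
  have he := Fd_energy (β := β) (δ := δ) (s := σ) (p := p) hβ0 h0 hδ hp (by rw [hβ]; ring)
  have ht := trig_sum_sq K (sC (Fd β δ)) (fun k => (2/π) * (k * SI β 1))
    (fun k _ => sC_Fd_bound hβ0 hβ1 hδ k)
  gcongr

lemma main_ineq2 {σ L p η : ℝ} (h0 : 0 < σ) (h1 : σ ≤ 1) (hL : 0 ≤ L) (K : Finset ℕ)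
    (h : ∀ f : ℕ → ℝ, f 0 = 0 → (Function.support f).Finite → (∀ n ∈ K, f n = 0) →
      L * (∑' n : ℕ, Wweight σ ((3 + 2 * σ) / 4) n * (f n) ^ 2) ≤ Qform σ f)
    (hp : 0 < p) (hp1 : p ≤ 1/4) (hη : 0 < η) (hne : (3+2*σ)/4 - p/4 ≠ 1) :
    L * ((4/π^2) * (Dc ((3+2*σ)/4 - p/4)^2 * Cc σ) *
      ((∑' n : ℕ, 1/(n:ℝ)^(1+p)) - (1 + 4 * (∑' n : ℕ, 1/((n:ℝ)+2)^(2:ℝ)) + K.card))) ≤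
      (2/π) * ((1+η) * (2^p/p) + (1+1/η) * 2^(2*σ) *
        (π * (∑ k ∈ K, (2/π) * (k * SI ((3+2*σ)/4 - p/4) 1))^2)) := by
  have hM := main_ineq h0 h1 hL K h hp hp1 hη hne
  set β := (3+2*σ)/4 - p/4 with hβ
  have hβ0 : 0 < β := by linarith
  have hβ1 : β < 3/2 := by linarith
  set c := (4/π^2) * (Dc β ^2 * Cc σ) with hc
  have hc0 : 0 ≤ c := by have := Cc_nonneg σ; positivity
  have hs2 : Summable (fun n : ℕ => 1/((n:ℝ)+2)^(2:ℝ)) := by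
    have := (summable_nat_add_iff 2).2 (Real.summable_one_div_nat_rpow (p := 2) |>.2 (by norm_num))
    simpa using this
  have hs1 : Summable (fun n : ℕ => 1/(n:ℝ)^(1+p)) := Real.summable_one_div_nat_rpow.2 (by linarith)
  have hs1' : Summable (fun n : ℕ => 1/((n:ℝ)+2)^(1+p)) := by
    have := (summable_nat_add_iff 2).2 hs1
    simpa using this
  have hshift : (∑' n : ℕ, 1/(n:ℝ)^(1+p)) = 1 + ∑' n : ℕ, 1/((n:ℝ)+2)^(1+p) := by
    have := hs1.sum_add_tsum_nat_add 2
    rw [← this]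
    simp [Finset.sum_range_succ, Real.zero_rpow (show 1+p ≠ 0 by linarith)]
  have hterm : ∀ n : ℕ, c * ((1/((n:ℝ)+2)^(1+p) - 4 * (1/((n:ℝ)+2)^(2:ℝ))) - if n ∈ K then 1 else 0) ≤
      Wweight σ ((3+2*σ)/4) n * (if n ∈ K then 0 else (2/π) * SI β n)^2 := by
    intro n
    have htl := term_low hp n
    rcases Nat.eq_zero_or_pos n with hn | hn
    · subst hn
      have hz : (if 0 ∈ K then 0 else (2/π) * SI β 0) = 0 := by simp [SI]
      rw [hz]
      norm_num at htl ⊢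
      apply mul_nonpos_of_nonneg_of_nonpos hc0
      split_ifs <;> linarith
    · by_cases hk : n ∈ K
      · simp only [hk, if_true]
        have e1 : 1/((n:ℝ)+2)^(1+p) ≤ 1 := by
          rw [div_le_one (by positivity)]
          apply Real.one_le_rpow <;> linarith [(Nat.cast_nonneg n : (0:ℝ) ≤ n)]
        have e2 : 0 ≤ 1/((n:ℝ)+2)^(2:ℝ) := by positivity
        have : c * ((1/((n:ℝ)+2)^(1+p) - 4 * (1/((n:ℝ)+2)^(2:ℝ))) - 1) ≤ 0 :=
          mul_nonpos_of_nonneg_of_nonpos hc0 (by linarith)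
        simpa using this
      · simp only [hk, if_false, sub_zero]
        have hw := W_low h0 h1 hp hp1 n hn
        rw [SI_eq hβ0 hβ1 hne hn]
        have hD : 0 ≤ (4/π^2) * Dc β ^ 2 := by positivity
        calc _ ≤ c * (n^2 * ((n:ℝ)+2)^(-(3+p))) := by gcongr
          _ = ((4/π^2) * Dc β ^ 2) * (Cc σ * (n^2 * ((n:ℝ)+2)^(-(3+p)))) := by rw [hc]; ring
          _ ≤ _ := mul_le_mul_of_nonneg_left hw hD
          _ = _ := by ring
  have hlim : Tendsto (fun M : ℕ => L * (c * (((∑ n ∈ Finset.range M, 1/((n:ℝ)+2)^(1+p)) -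
      4 * ∑' n : ℕ, 1/((n:ℝ)+2)^(2:ℝ)) - K.card))) atTop
      (𝓝 (L * (c * (((∑' n : ℕ, 1/((n:ℝ)+2)^(1+p)) -
      4 * ∑' n : ℕ, 1/((n:ℝ)+2)^(2:ℝ)) - K.card)))) :=
    ((((hs1'.hasSum.tendsto_sum_nat).sub_const _).sub_const _).const_mul _).const_mul _
  rw [hshift, show (1 + ∑' n : ℕ, 1/((n:ℝ)+2)^(1+p)) - (1 + 4 * (∑' n : ℕ, 1/((n:ℝ)+2)^(2:ℝ)) + K.card) =
    ((∑' n : ℕ, 1/((n:ℝ)+2)^(1+p)) - 4 * ∑' n : ℕ, 1/((n:ℝ)+2)^(2:ℝ)) - K.card by ring]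
  refine le_of_tendsto hlim (Filter.Eventually.of_forall fun M => ?_)
  refine le_trans ?_ (hM M)
  apply mul_le_mul_of_nonneg_left _ hL
  refine le_trans ?_ (Finset.sum_le_sum fun n _ => hterm n)
  rw [← Finset.mul_sum]
  apply mul_le_mul_of_nonneg_left _ hc0
  rw [Finset.sum_sub_distrib, Finset.sum_sub_distrib, ← Finset.mul_sum]
  have b1 : ∑ n ∈ Finset.range M, 1/((n:ℝ)+2)^(2:ℝ) ≤ ∑' n : ℕ, 1/((n:ℝ)+2)^(2:ℝ) :=
    hs2.sum_le_tsum _ (fun n _ => by positivity)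
  have b2 : ∑ n ∈ Finset.range M, (if n ∈ K then (1:ℝ) else 0) ≤ K.card := by
    rw [← Finset.sum_filter, Finset.sum_const, nsmul_eq_mul, mul_one]
    norm_cast
    apply Finset.card_le_card
    intro n hn; exact (Finset.mem_filter.1 hn).2
  linarith

lemma Gamma_cont {x : ℝ} (hx : 0 < x) : ContinuousAt Real.Gamma x :=
  (Real.differentiableAt_Gamma (fun m => by
    have : (0:ℝ) ≤ m := Nat.cast_nonneg m
    apply ne_of_gt; linarith)).continuousAt

lemma Dc_cont {α : ℝ} (h0 : 0 < α) (h1 : α < 3/2) : ContinuousAt Dc α := by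
  unfold Dc
  apply ContinuousAt.div _ (Gamma_cont h0) (Real.Gamma_pos_of_pos h0).ne'
  apply ContinuousAt.mul
  · apply ContinuousAt.mul continuousAt_const
    apply ContinuousAt.rpow continuousAt_const (by fun_prop)
    left; norm_num
  · exact ContinuousAt.comp' (f := fun β : ℝ => 3/2-β) (Gamma_cont (by linarith)) (by fun_prop)

lemma final_lim {σ L η : ℝ} (h0 : 0 < σ) (h1 : σ ≤ 1) (hL : 0 ≤ L) (K : Finset ℕ)
    (h : ∀ f : ℕ → ℝ, f 0 = 0 → (Function.support f).Finite → (∀ n ∈ K, f n = 0) →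
      L * (∑' n : ℕ, Wweight σ ((3 + 2 * σ) / 4) n * (f n) ^ 2) ≤ Qform σ f)
    (hη : 0 < η) : L ≤ 1 + η := by
  set α := (3+2*σ)/4 with hα
  set B := (1 + 4 * (∑' n : ℕ, 1/((n:ℝ)+2)^(2:ℝ)) + K.card) with hB
  have hp0 : Tendsto (fun p : ℝ => p) (𝓝[>] 0) (𝓝 0) := tendsto_id.mono_left nhdsWithin_le_nhds
  have hβ : Tendsto (fun p : ℝ => α - p/4) (𝓝[>] 0) (𝓝 α) := by
    have := (hp0.div_const 4).const_sub α
    simpa using this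
  have hD : Tendsto (fun p : ℝ => Dc (α - p/4)) (𝓝[>] 0) (𝓝 (Dc α)) :=
    (Dc_cont (by linarith) (by linarith)).tendsto.comp hβ
  have hZ : Tendsto (fun p : ℝ => p * ∑' n : ℕ, 1/(n:ℝ)^(1+p)) (𝓝[>] 0) (𝓝 1) := by
    have hs : Tendsto (fun p : ℝ => 1 + p) (𝓝[>] 0) (𝓝[>] 1) := by
      apply tendsto_nhdsWithin_of_tendsto_nhds_of_eventually_within
      · simpa using hp0.const_add 1
      · filter_upwards [self_mem_nhdsWithin] with p hp
        have : 0 < p := hp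
        simpa using this
    have := tendsto_sub_mul_tsum_nat_rpow.comp hs
    refine this.congr fun p => ?_
    simp
  have hne : ∀ᶠ p : ℝ in 𝓝[>] 0, α - p/4 ≠ 1 := by
    by_cases h : α = 1
    · filter_upwards [self_mem_nhdsWithin] with p hp
      have : 0 < p := hp
      rw [h]; intro hc; linarith
    · exact hβ.eventually_ne h
  have hsm : ∀ᶠ p : ℝ in 𝓝[>] 0, p ≤ 1/4 :=
    (hp0.eventually (gt_mem_nhds (show (0:ℝ) < 1/4 by norm_num))).mono fun p hp => le_of_lt hp
  have hS : Tendsto (fun p : ℝ => SI (α - p/4) 1) (𝓝[>] 0)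
      (𝓝 (Dc α * (Real.Gamma α / Real.Gamma (3-α)))) := by
    have hG : ContinuousAt (fun β : ℝ => Real.Gamma β / Real.Gamma (3-β)) α := by
      apply ContinuousAt.div (Gamma_cont (by linarith))
      · exact ContinuousAt.comp' (f := fun β : ℝ => 3-β) (Gamma_cont (by linarith)) (by fun_prop)
      · exact (Real.Gamma_pos_of_pos (by linarith)).ne'
    refine (hD.mul (hG.tendsto.comp hβ)).congr' ?_
    filter_upwards [hne, hsm, self_mem_nhdsWithin] with p h2 h3 h4
    have h4 : 0 < p := h4
    rw [SI_eq (by linarith) (by linarith) h2 le_rfl]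
    simp only [Function.comp]
    norm_num
  have hR : Tendsto (fun p : ℝ => (2/π) * ((1+η) * 2^p + p * ((1+1/η) * 2^(2*σ) *
        (π * (∑ k ∈ K, (2/π) * (k * SI (α - p/4) 1))^2)))) (𝓝[>] 0)
      (𝓝 ((2/π) * ((1+η) * 2^(0:ℝ) + 0 * ((1+1/η) * 2^(2*σ) *
        (π * (∑ k ∈ K, (2/π) * (k * (Dc α * (Real.Gamma α / Real.Gamma (3-α)))))^2))))) := by
    apply Tendsto.const_mul
    apply Tendsto.add
    · apply Tendsto.const_mul
      exact tendsto_const_nhds.rpow hp0 (by left; norm_num)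
    · apply hp0.mul
      apply Tendsto.const_mul
      apply Tendsto.const_mul
      apply Tendsto.pow
      apply tendsto_finsetSum
      intro k _
      exact (hS.const_mul _).const_mul _
  have hLft : Tendsto (fun p : ℝ => L * ((4/π^2) * (Dc (α - p/4)^2 * Cc σ) *
      (p * (∑' n : ℕ, 1/(n:ℝ)^(1+p)) - p * B))) (𝓝[>] 0)
      (𝓝 (L * ((4/π^2) * (Dc α^2 * Cc σ) * (1 - 0 * B)))) := by
    apply Tendsto.const_mul
    apply Tendsto.mul
    · exact ((hD.pow 2).mul_const _).const_mul _
    · exact hZ.sub (hp0.mul_const _)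
  have hfin := le_of_tendsto_of_tendsto hLft hR (by
    filter_upwards [hne, hsm, self_mem_nhdsWithin] with p h2 h3 h4
    have h4 : 0 < p := h4
    have := main_ineq2 h0 h1 hL K h h4 h3 hη h2
    have := mul_le_mul_of_nonneg_left this h4.le
    rw [← hB, ← hα] at this
    calc _ = _ := by ring
      _ ≤ _ := this
      _ = _ := by
        generalize (∑ k ∈ K, (2/π) * (k * SI (α - p/4) 1)) = T
        field_simp)
  rw [hα, Cc_Dc h0 h1] at hfin
  have hpi := Real.pi_pos
  simp only [zero_mul, add_zero, sub_zero, Real.rpow_zero, mul_one] at hfin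
  have e : L * (4/π^2 * (π/2)) = (2/π) * L := by field_simp; ring
  rw [e] at hfin
  exact le_of_mul_le_mul_left hfin (by positivity)

end Helpers

/-- The optimal Hardy-weight `W^op_σ = W_{(3+2σ)/4, σ}` is optimal near infinity. -/
theorem stmt_12 (σ : ℝ) (hσ0 : 0 < σ) (hσ1 : σ ≤ 1) (lam : ℝ) (hlam : 0 ≤ lam)
    (K : Finset ℕ)
    (h : ∀ f : ℕ → ℝ, f 0 = 0 → (Function.support f).Finite → (∀ n ∈ K, f n = 0) →
      (1 + lam) * (∑' n : ℕ, Wweight σ ((3 + 2 * σ) / 4) n * (f n) ^ 2) ≤ Qform σ f) :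
    lam = 0 := by
  have hfin : ∀ η : ℝ, 0 < η → 1 + lam ≤ 1 + η := fun η hη =>
    final_lim hσ0 hσ1 (by linarith) K h hη
  have : lam ≤ 0 := le_of_forall_pos_le_add (fun η hη => by linarith [hfin η hη])
  linarith
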